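/- Let d ≥ 3 be an integer. There exists a constant C = C(d) > 0 with the following property: for every real-valued V : ℤᵈ → ℝ with ∑_{n ∈ ℤᵈ} |V(n)|^{2/3} < ∞, letting H = Δ + V and letting E be the set of (necessarily real) eigenvalues λ of H with |λ| > d, one has ∑_{λ ∈ E} √((|λ| − d)/(|λ| + d)) ≤ C · ‖V‖_{2/3}, each eigenvalue being counted once. -/

import Mathlib

/-!
Every summand is at most `1`, so it suffices to bound the number of eigenvalues outside `[-d, d]`
by a constant times `‖V‖₁`, since `‖V‖₁ ≤ ‖V‖_{2/3}`. The left and the right half of the spectrum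
are treated together through a sign `σ = ±1`, with the form `Q(f) = ⟪f, (d - σΔ) f⟫`.

*Transience.* In dimension `d ≥ 3`, point evaluation is bounded in the energy norm:
`|f(x₀)|² ≤ G * Q(f)`, with `G = 85 / 6` (`re_inner_L_le`). Instead of computing the Green function,
each product `|f(x)||f(y)|` over an edge is split by AM-GM with an explicit rational weight
`p(x, y) = 1 / p(y, x)`; the sum of the weights over the `2d` neighbours of a point is at most `2d`,
and smaller than that by a definite amount at `x₀` (`sum_edgeWeight_le`). The weight is a rational
substitute for the quotient `g(y) / g(x)` with `g(x) = (|x - x₀|² + 10)^(-1/4)`, a positive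
function that is superharmonic on `ℝᵈ` for `d ≥ 3`.

*Counting.* Let `f₁, …, f_N` be eigenvectors for distinct eigenvalues `λᵢ` with `σλᵢ > d`. They are
orthogonal, and the Gram matrix `M` of `Q` on them is positive definite. The matrix `W` of `σV` is
`M` plus a nonnegative diagonal matrix, so `N ≤ tr(M⁻¹W)`. Expanding the matrix elements of `V` over
the lattice, `tr(M⁻¹W) = ∑ₙ σV(n) S(n)`, where `S(n)` is the squared norm of evaluation at `n` on
the span, in the norm given by `Q`; hence `|S(n)| ≤ G` and `N ≤ G‖V‖₁` (`card_le`).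
-/

/-- `L` is the discrete Laplacian on `ℓ²(ℤᵈ)`:
`(Lf)(n) = (1/2)∑_{j=1}^d (f(n+eⱼ) + f(n-eⱼ))`. -/
def IsDiscreteLaplacian (d : ℕ)
    (L : lp (fun _ : Fin d → ℤ => ℂ) 2 →L[ℂ] lp (fun _ : Fin d → ℤ => ℂ) 2) : Prop :=
  ∀ (f : lp (fun _ : Fin d → ℤ => ℂ) 2) (n : Fin d → ℤ),
    L f n = (1 / 2) * ∑ j : Fin d, (f (n + Pi.single j 1) + f (n - Pi.single j 1))

/-- `T` is the operator of multiplication by `V` on `ℓ²(ℤᵈ)`. -/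
def IsMulOp (d : ℕ) (V : (Fin d → ℤ) → ℂ)
    (T : lp (fun _ : Fin d → ℤ => ℂ) 2 →L[ℂ] lp (fun _ : Fin d → ℤ => ℂ) 2) : Prop :=
  ∀ (f : lp (fun _ : Fin d → ℤ => ℂ) 2) (n : Fin d → ℤ), T f n = V n * f n

/-- The set of (necessarily real) eigenvalues `λ` of `H` with `|λ| > d`. -/
def realEvSet (d : ℕ)
    (H : lp (fun _ : Fin d → ℤ => ℂ) 2 →L[ℂ] lp (fun _ : Fin d → ℤ => ℂ) 2) : Set ℂ :=
  {l : ℂ | (∃ f : lp (fun _ : Fin d → ℤ => ℂ) 2, f ≠ 0 ∧ H f = l • f) ∧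
    l.im = 0 ∧ (d : ℝ) < |l.re|}

open scoped ComplexOrder

/-! ### Edge weights on the lattice -/

/-- The Hilbert space `ℓ²(ℤᵈ)`. -/
noncomputable abbrev Ell2 (d : ℕ) := lp (fun _ : Fin d → ℤ => ℂ) 2

/-- `|x - x₀|² + 10`. The shift `10` is large enough for the weights `edgeWeight` to have sum at most
`2d` around every lattice point. -/
noncomputable def shiftedSq {d : ℕ} (x₀ x : Fin d → ℤ) : ℝ :=
  ∑ i, ((x i - x₀ i : ℤ) : ℝ) ^ 2 + 10

/-- The weight `p(x, y)` of the oriented edge from `x` to `y`. With `u = shiftedSq x₀`, this is a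
rational function of `u x / u y` agreeing to second order at `1` with `(u x / u y)^(1/4)`. -/
noncomputable def edgeWeight {d : ℕ} (x₀ x y : Fin d → ℤ) : ℝ :=
  (5 * shiftedSq x₀ x + 3 * shiftedSq x₀ y) / (5 * shiftedSq x₀ y + 3 * shiftedSq x₀ x)

lemma shiftedSq_pos {d : ℕ} (x₀ x : Fin d → ℤ) : 0 < shiftedSq x₀ x := by
  unfold shiftedSq; positivity

lemma edgeWeight_pos {d : ℕ} (x₀ x y : Fin d → ℤ) : 0 < edgeWeight x₀ x y := by
  have := shiftedSq_pos x₀ x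
  have := shiftedSq_pos x₀ y
  unfold edgeWeight; positivity

lemma edgeWeight_le_two {d : ℕ} (x₀ x y : Fin d → ℤ) : edgeWeight x₀ x y ≤ 2 := by
  have := shiftedSq_pos x₀ x
  have := shiftedSq_pos x₀ y
  unfold edgeWeight
  rw [div_le_iff₀ (by positivity)]
  linarith

lemma edgeWeight_mul_swap {d : ℕ} (x₀ x y : Fin d → ℤ) :
    edgeWeight x₀ x y * edgeWeight x₀ y x = 1 := by
  have := shiftedSq_pos x₀ x
  have := shiftedSq_pos x₀ y
  unfold edgeWeight
  field_simp

lemma shiftedSq_add {d : ℕ} (x₀ x : Fin d → ℤ) (j : Fin d) :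
    shiftedSq x₀ (x + Pi.single j 1)
      = shiftedSq x₀ x + (1 + 2 * ((x j - x₀ j : ℤ) : ℝ)) := by
  have h : ∀ i, (((x + Pi.single j 1 : Fin d → ℤ) i - x₀ i : ℤ) : ℝ) ^ 2
      = ((x i - x₀ i : ℤ) : ℝ) ^ 2
        + if i = j then (1 + 2 * ((x i - x₀ i : ℤ) : ℝ)) else 0 := by
    intro i
    by_cases hi : i = j
    · subst hi; simp; ring
    · simp [hi]
  unfold shiftedSq
  simp_rw [h, Finset.sum_add_distrib]
  simp; ring

lemma shiftedSq_sub {d : ℕ} (x₀ x : Fin d → ℤ) (j : Fin d) :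
    shiftedSq x₀ (x - Pi.single j 1)
      = shiftedSq x₀ x + (1 - 2 * ((x j - x₀ j : ℤ) : ℝ)) := by
  have h := shiftedSq_add x₀ (x - Pi.single j 1) j
  simp only [sub_add_cancel] at h
  rw [h]; simp; ring

/-- The weights of the two edges in one coordinate direction, where `x` is the coordinate relative
to the centre and `u` is the value of `shiftedSq`. -/
lemma edge_pair_le (u x : ℝ) (hu : x ^ 2 + 10 ≤ u) :
    (5 * u + 3 * (u + (1 + 2 * x))) / (5 * (u + (1 + 2 * x)) + 3 * u)
      + (5 * u + 3 * (u + (1 - 2 * x))) / (5 * (u + (1 - 2 * x)) + 3 * u)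
      ≤ 2 - 4 / (8 * u + 5) + 96 * x ^ 2 / (8 * u + 5) ^ 2 := by
  obtain ⟨K, hK⟩ : ∃ K, K = 8 * u + 5 := ⟨_, rfl⟩
  have hu' : u = (K - 5) / 8 := by linarith
  have hK1 : 8 * x ^ 2 + 85 ≤ K := by linarith
  have h1 : 0 < K + 10 * x := by nlinarith [sq_nonneg (x + 1)]
  have h2 : 0 < K - 10 * x := by nlinarith [sq_nonneg (x - 1)]
  have h0 : 0 < K := by nlinarith [sq_nonneg x]
  have e1 : (5 * u + 3 * (u + (1 + 2 * x))) / (5 * (u + (1 + 2 * x)) + 3 * u)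
      + (5 * u + 3 * (u + (1 - 2 * x))) / (5 * (u + (1 - 2 * x)) + 3 * u)
      = 2 - 4 * ((K - 20 * x ^ 2) / ((K + 10 * x) * (K - 10 * x))) := by
    have a1 : 5 * (u + (1 + 2 * x)) + 3 * u = K + 10 * x := by rw [hK]; ring
    have a2 : 5 * (u + (1 - 2 * x)) + 3 * u = K - 10 * x := by rw [hK]; ring
    rw [a1, a2, hu']
    have h1' := h1.ne'
    have h2' := h2.ne'
    rw [div_add_div _ _ h1' h2', eq_sub_iff_add_eq, ← mul_div_assoc (4 : ℝ), ← add_div,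
      div_eq_iff (mul_ne_zero h1' h2')]
    ring
  have e2 : (K - 24 * x ^ 2) / K ^ 2 ≤ (K - 20 * x ^ 2) / ((K + 10 * x) * (K - 10 * x)) := by
    rw [div_le_div_iff₀ (by positivity) (by positivity)]
    have : 0 ≤ x ^ 2 * (4 * K ^ 2 + 100 * K - 2400 * x ^ 2) := by
      apply mul_nonneg (sq_nonneg x)
      nlinarith [sq_nonneg x]
    nlinarith
  have e3 : (K - 24 * x ^ 2) / K ^ 2 = 1 / K - 24 * x ^ 2 / K ^ 2 := by
    field_simp
  rw [e1, ← hK]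
  rw [e3] at e2
  have e4 : 96 * x ^ 2 / K ^ 2 = 4 * (24 * x ^ 2 / K ^ 2) := by ring
  have e5 : 4 / K = 4 * (1 / K) := by ring
  rw [e4, e5]
  linarith

/-- Strict superharmonicity in dimension `d ≥ 3`: the terms `96 x² / K²` of `edge_pair_le` add up to
`12 / K - 1020 / K²`, which the terms `-4 / K` compensate because there are at least three. -/
lemma sum_edgeWeight_le {d : ℕ} (hd : 3 ≤ d) (x₀ x : Fin d → ℤ) :
    ∑ j, (edgeWeight x₀ x (x + Pi.single j 1) + edgeWeight x₀ x (x - Pi.single j 1))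
      ≤ 2 * d - 1020 / (8 * shiftedSq x₀ x + 5) ^ 2 := by
  have hpos := shiftedSq_pos x₀ x
  set K := 8 * shiftedSq x₀ x + 5 with hK
  have hK0 : 0 < K := by positivity
  have step : ∀ j ∈ (Finset.univ : Finset (Fin d)),
      edgeWeight x₀ x (x + Pi.single j 1) + edgeWeight x₀ x (x - Pi.single j 1)
      ≤ 2 - 4 / K + 96 / K ^ 2 * ((x j - x₀ j : ℤ) : ℝ) ^ 2 := by
    intro j _
    have h := edge_pair_le (shiftedSq x₀ x) ((x j - x₀ j : ℤ) : ℝ) (by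
      unfold shiftedSq
      have := Finset.single_le_sum (f := fun i => ((x i - x₀ i : ℤ) : ℝ) ^ 2)
        (fun i _ => sq_nonneg _) (Finset.mem_univ j)
      change ((x j - x₀ j : ℤ) : ℝ) ^ 2 ≤ _ at this
      linarith)
    unfold edgeWeight
    rw [shiftedSq_add, shiftedSq_sub]
    refine h.trans (le_of_eq ?_)
    rw [← hK]; ring
  refine (Finset.sum_le_sum step).trans ?_
  rw [Finset.sum_add_distrib, ← Finset.mul_sum]
  have hs : ∑ i, ((x i - x₀ i : ℤ) : ℝ) ^ 2 = (K - 85) / 8 := by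
    rw [hK]; unfold shiftedSq; ring
  rw [hs]
  simp only [Finset.sum_const, Finset.card_univ, Fintype.card_fin, nsmul_eq_mul]
  have hd' : (3 : ℝ) ≤ d := by exact_mod_cast hd
  have : (d : ℝ) * (2 - 4 / K) + 96 / K ^ 2 * ((K - 85) / 8)
      = 2 * d - 1020 / K ^ 2 - 4 * (d - 3) / K := by
    field_simp; ring
  rw [this]
  have : 0 ≤ 4 * ((d : ℝ) - 3) / K := by
    apply div_nonneg <;> linarith
  linarith

lemma sum_edgeWeight_le_two_mul {d : ℕ} (hd : 3 ≤ d) (x₀ x : Fin d → ℤ) :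
    ∑ j, (edgeWeight x₀ x (x + Pi.single j 1) + edgeWeight x₀ x (x - Pi.single j 1))
      ≤ 2 * d - (if x = x₀ then 12 / 85 else 0) := by
  have h := sum_edgeWeight_le hd x₀ x
  split_ifs with hx
  · subst hx
    refine h.trans (le_of_eq ?_)
    simp [shiftedSq]; norm_num
  · have : 0 ≤ 1020 / (8 * shiftedSq x₀ x + 5) ^ 2 := by positivity
    linarith

/-! ### Boundedness of point evaluation in the energy norm -/

lemma summable_normSq {d : ℕ} (f : Ell2 d) : Summable (fun n => ‖f n‖ ^ 2) := by
  have := (lp.memℓp f).summable (by norm_num)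
  simpa using this

/-- AM-GM, weighted by `edgeWeight`. -/
lemma mul_le_edgeWeight {d : ℕ} (x₀ x y : Fin d → ℤ) (a b : ℝ) :
    a * b ≤ 1 / 2 * (edgeWeight x₀ x y * a ^ 2 + edgeWeight x₀ y x * b ^ 2) := by
  have h1 := edgeWeight_pos x₀ x y
  have h2 := edgeWeight_mul_swap x₀ x y
  set p := edgeWeight x₀ x y
  set q := edgeWeight x₀ y x
  have h3 : 0 ≤ p * (a - q * b) ^ 2 := by positivity
  have : p * (a - q * b) ^ 2 = p * a ^ 2 - 2 * (p * q) * a * b + (p * q) * q * b ^ 2 := by ring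
  rw [this, h2] at h3
  linarith

/-- The weighted AM-GM inequality summed over all edges. After translating the terms attached to the
neighbours, the coefficient of `‖f n‖²` is half the sum of the weights of the edges leaving `n`. -/
lemma energy_sum_le {d : ℕ} (hd : 3 ≤ d) (x₀ : Fin d → ℤ) (f : Ell2 d) {S : ℝ}
    (g : (Fin d → ℤ) → ℝ) (hg : HasSum g S)
    (hgf : ∀ n, g n ≤ 1 / 2 * ∑ j : Fin d,
      (‖f n‖ * ‖f (n + Pi.single j 1)‖ + ‖f n‖ * ‖f (n - Pi.single j 1)‖)) :
    S ≤ d * ‖f‖ ^ 2 - 6 / 85 * ‖f x₀‖ ^ 2 := by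
  set w : (Fin d → ℤ) → ℝ := fun n => ‖f n‖ ^ 2 with hw
  have hws : Summable w := summable_normSq f
  have hbd : ∀ (φ : (Fin d → ℤ) → (Fin d → ℤ)),
      Summable (fun n => edgeWeight x₀ n (φ n) * w n) := by
    intro φ
    refine Summable.of_nonneg_of_le (fun n => ?_) (fun n => ?_) (hws.mul_left 2)
    · exact mul_nonneg (edgeWeight_pos _ _ _).le (sq_nonneg _)
    · exact mul_le_mul_of_nonneg_right (edgeWeight_le_two _ _ _) (sq_nonneg _)
  have hA := fun j : Fin d => (hbd (fun n => n + Pi.single j 1)).hasSum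
  have hB := fun j : Fin d => (hbd (fun n => n - Pi.single j 1)).hasSum
  have hA' := fun j : Fin d => (Equiv.hasSum_iff (Equiv.subRight (Pi.single j (1 : ℤ)))).2 (hA j)
  have hB' := fun j : Fin d => (Equiv.hasSum_iff (Equiv.addRight (Pi.single j (1 : ℤ)))).2 (hB j)
  have hall := (hasSum_sum (s := Finset.univ) (fun j (_ : j ∈ Finset.univ) =>
    (((hA j).add (hB' j)).add ((hB j).add (hA' j))))).mul_left (1 / 4)
  have hP := (hasSum_sum (s := Finset.univ) (fun j (_ : j ∈ Finset.univ) =>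
    ((hA j).add (hB j)))).mul_left (1 / 2)
  have hS : S ≤ 1 / 2 * ∑ j : Fin d, ((∑' n, edgeWeight x₀ n (n + Pi.single j 1) * w n)
      + ∑' n, edgeWeight x₀ n (n - Pi.single j 1) * w n) := by
    refine (hasSum_le (fun n => ?_) hg hall).trans (le_of_eq ?_)
    · refine (hgf n).trans ?_
      rw [Finset.mul_sum, Finset.mul_sum]
      refine Finset.sum_le_sum fun j _ => ?_
      have h1 := mul_le_edgeWeight x₀ n (n + Pi.single j 1) ‖f n‖ ‖f (n + Pi.single j 1)‖
      have h2 := mul_le_edgeWeight x₀ n (n - Pi.single j 1) ‖f n‖ ‖f (n - Pi.single j 1)‖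
      simp only [Function.comp, Equiv.coe_addRight, Equiv.subRight_apply, add_sub_cancel_right,
        sub_add_cancel, hw]
      linarith
    · rw [Finset.mul_sum, Finset.mul_sum]
      refine Finset.sum_congr rfl fun j _ => ?_
      ring
  have hnorm : HasSum w (‖f‖ ^ 2) := by
    have := lp.hasSum_norm (p := 2) (by norm_num) f
    simpa using this
  have hR := (hnorm.mul_left (d : ℝ)).sub
    (hasSum_ite_eq x₀ (6 / 85 * ‖f x₀‖ ^ 2))
  refine hS.trans (hasSum_le (fun n => ?_) hP hR)
  have h := mul_le_mul_of_nonneg_right (sum_edgeWeight_le_two_mul hd x₀ n) (sq_nonneg ‖f n‖)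
  rw [Finset.sum_mul] at h
  simp only [← add_mul]
  split_ifs at h ⊢ with hx
  · subst hx; simp only [hw]; linarith
  · simp only [hw]; linarith

lemma hasSum_inner_L {d : ℕ} {L : Ell2 d →L[ℂ] Ell2 d} (hL : IsDiscreteLaplacian d L)
    (f g : Ell2 d) :
    HasSum (fun n => (1 / 2) * ∑ j : Fin d,
      (starRingEnd ℂ (f n) * g (n + Pi.single j 1) + starRingEnd ℂ (f n) * g (n - Pi.single j 1)))
      (inner ℂ f (L g)) := by
  have := lp.hasSum_inner (𝕜 := ℂ) f (L g)
  refine this.congr_fun fun n => ?_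
  rw [hL g n, RCLike.inner_apply, mul_assoc, Finset.sum_mul]
  congr 1
  refine Finset.sum_congr rfl fun j _ => ?_
  ring

/-- The Hardy-type inequality `6/85 * ‖f x₀‖² ≤ ⟪f, (d - σΔ) f⟫` for `σ = ±1`. -/
lemma re_inner_L_le {d : ℕ} (hd : 3 ≤ d) {L : Ell2 d →L[ℂ] Ell2 d}
    (hL : IsDiscreteLaplacian d L) (σ : ℝ) (hσ : |σ| = 1) (f : Ell2 d) (x₀ : Fin d → ℤ) :
    σ * (inner ℂ f (L f)).re ≤ d * ‖f‖ ^ 2 - 6 / 85 * ‖f x₀‖ ^ 2 := by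
  have h := ((Complex.hasSum_re (hasSum_inner_L hL f f)).mul_left σ)
  refine energy_sum_le hd x₀ f _ h fun n => ?_
  refine (le_abs_self _).trans ?_
  rw [abs_mul, hσ, one_mul]
  refine (Complex.abs_re_le_norm _).trans ?_
  rw [norm_mul]
  norm_num
  refine (norm_sum_le _ _).trans (Finset.sum_le_sum fun j _ => ?_)
  refine (norm_add_le _ _).trans ?_
  simp

/-! ### Symmetry of the operators -/

lemma summable_conj_mul {d : ℕ} (f g : Ell2 d) (φ : (Fin d → ℤ) ≃ (Fin d → ℤ)) :
    Summable (fun n => starRingEnd ℂ (f n) * g (φ n)) := by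
  refine Summable.of_norm_bounded
    ((summable_normSq f).add ((φ.summable_iff).2 (summable_normSq g))) fun n => ?_
  simp only [norm_mul, RCLike.norm_conj, Function.comp]
  nlinarith [sq_nonneg (‖f n‖ - ‖g (φ n)‖), sq_nonneg (‖f n‖), sq_nonneg (‖g (φ n)‖)]

lemma inner_L_eq {d : ℕ} {L : Ell2 d →L[ℂ] Ell2 d} (hL : IsDiscreteLaplacian d L)
    (f g : Ell2 d) :
    inner ℂ f (L g) = (1 / 2) * ∑ j : Fin d,
      ((∑' n, starRingEnd ℂ (f n) * g (n + Pi.single j 1))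
        + ∑' n, starRingEnd ℂ (f (n + Pi.single j 1)) * g n) := by
  have h1 := fun j : Fin d =>
    (summable_conj_mul f g (Equiv.addRight (Pi.single j (1 : ℤ)))).hasSum
  have h2 := fun j : Fin d =>
    (summable_conj_mul f g (Equiv.subRight (Pi.single j (1 : ℤ)))).hasSum
  have h := (hasSum_sum (s := Finset.univ) (fun j (_ : j ∈ Finset.univ) =>
    ((h1 j).add (h2 j)))).mul_left (1 / 2)
  rw [(hasSum_inner_L hL f g).unique h]
  congr 1
  refine Finset.sum_congr rfl fun j _ => ?_
  congr 1
  rw [← (Equiv.addRight (Pi.single j (1 : ℤ))).tsum_eq]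
  simp

lemma L_symm {d : ℕ} {L : Ell2 d →L[ℂ] Ell2 d} (hL : IsDiscreteLaplacian d L)
    (f g : Ell2 d) : inner ℂ (L f) g = inner ℂ f (L g) := by
  rw [← inner_conj_symm, inner_L_eq hL, inner_L_eq hL]
  simp only [map_mul, map_sum, map_add, Complex.conj_tsum, Complex.conj_conj]
  congr 1
  · simp [Complex.conj_ofNat]
  · refine Finset.sum_congr rfl fun j _ => ?_
    rw [add_comm]
    simp only [mul_comm]

lemma hasSum_inner_T {d : ℕ} {V : (Fin d → ℤ) → ℝ} {T : Ell2 d →L[ℂ] Ell2 d}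
    (hT : IsMulOp d (fun n => (V n : ℂ)) T) (f g : Ell2 d) :
    HasSum (fun n => (V n : ℂ) * (starRingEnd ℂ (f n) * g n)) (inner ℂ f (T g)) := by
  have := lp.hasSum_inner (𝕜 := ℂ) f (T g)
  refine this.congr_fun fun n => ?_
  rw [hT g n, RCLike.inner_apply]
  ring

lemma T_symm {d : ℕ} {V : (Fin d → ℤ) → ℝ} {T : Ell2 d →L[ℂ] Ell2 d}
    (hT : IsMulOp d (fun n => (V n : ℂ)) T) (f g : Ell2 d) :
    inner ℂ (T f) g = inner ℂ f (T g) := by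
  rw [← inner_conj_symm]
  refine (Complex.hasSum_conj'.2 (hasSum_inner_T hT g f)).unique ?_
  refine (hasSum_inner_T hT f g).congr_fun fun n => ?_
  simp only [map_mul, Complex.conj_ofReal, Complex.conj_conj]
  ring

/-! ### Counting eigenvalues -/

/-- A trace bound of Birman-Schwinger type: the number of distinct eigenvalues on one side of
`[-d, d]` is at most `85/6 * ‖V‖₁`. -/
lemma card_le {d : ℕ} (hd : 3 ≤ d) {V : (Fin d → ℤ) → ℝ} (hV : Summable fun n => |V n|)
    {L T : Ell2 d →L[ℂ] Ell2 d} (hL : IsDiscreteLaplacian d L)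
    (hT : IsMulOp d (fun n => (V n : ℂ)) T) (σ : ℝ) (hσ : |σ| = 1)
    {ι : Type*} [Fintype ι] [DecidableEq ι] (lam : ι → ℝ) (hinj : Function.Injective lam)
    (hlam : ∀ i, (d : ℝ) < σ * lam i) (f : ι → Ell2 d) (hf : ∀ i, f i ≠ 0)
    (heig : ∀ i, (L + T) (f i) = (lam i : ℂ) • f i) :
    (Fintype.card ι : ℝ) ≤ 85 / 6 * ∑' n, |V n| := by
  have horth : ∀ i j, i ≠ j → inner ℂ (f i) (f j) = 0 := by
    intro i j hij
    have h : inner ℂ ((L + T) (f i)) (f j) = inner ℂ (f i) ((L + T) (f j)) := by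
      simp only [add_apply, inner_add_left, inner_add_right, L_symm hL,
        T_symm hT]
    rw [heig, heig, inner_smul_left, inner_smul_right, Complex.conj_ofReal, ← sub_eq_zero,
      ← sub_mul] at h
    refine (mul_eq_zero.1 h).resolve_left ?_
    refine sub_ne_zero.2 ?_
    exact_mod_cast hinj.ne hij
  have hli : LinearIndependent ℂ f := linearIndependent_of_ne_zero_of_inner_eq_zero hf
    (fun i j hij => horth i j hij)
  set A : Ell2 d →L[ℂ] Ell2 d := (d : ℂ) • ContinuousLinearMap.id ℂ _ - (σ : ℂ) • L with hA
  have hAapp : ∀ g, A g = (d : ℂ) • g - (σ : ℂ) • L g := fun g => by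
    rw [hA]; rfl
  have hAsymm : ∀ g h, inner ℂ (A g) h = inner ℂ g (A h) := by
    intro g h
    simp only [hAapp, inner_sub_left, inner_sub_right, inner_smul_left, inner_smul_right, L_symm hL,
      Complex.conj_ofReal, Complex.conj_natCast]
  have hAbd : ∀ (g : Ell2 d) n, ‖g n‖ ^ 2 ≤ 85 / 6 * (inner ℂ g (A g)).re := by
    intro g n
    have h := re_inner_L_le hd hL σ hσ g n
    have : (inner ℂ g (A g)).re = d * ‖g‖ ^ 2 - σ * (inner ℂ g (L g)).re := by
      rw [hAapp, inner_sub_right, inner_smul_right, inner_smul_right, inner_self_eq_norm_sq_to_K]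
      simp [← Complex.ofReal_pow]
    rw [this]
    linarith
  set M : Matrix ι ι ℂ := Matrix.of fun i j => inner ℂ (f i) (A (f j)) with hM
  have hquad : ∀ x : ι → ℂ, star x ⬝ᵥ (M.mulVec x)
      = inner ℂ (∑ i, x i • f i) (A (∑ i, x i • f i)) := by
    intro x
    simp only [dotProduct, Matrix.mulVec, hM, Matrix.of_apply, map_sum, sum_inner, inner_sum,
      inner_smul_left, inner_smul_right, map_smul, Pi.star_apply, RCLike.star_def, Finset.mul_sum]
    rw [Finset.sum_comm]
    refine Finset.sum_congr rfl fun i _ => Finset.sum_congr rfl fun j _ => ?_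
    ring
  -- `Q` vanishes only at `0`, since it controls every value of its argument
  have hposdef : M.PosDef := by
    refine Matrix.PosDef.of_dotProduct_mulVec_pos ?_ ?_
    · ext i j
      simp only [hM, Matrix.conjTranspose_apply, Matrix.of_apply, RCLike.star_def]
      rw [inner_conj_symm, hAsymm]
    · intro x hx
      rw [hquad]
      set g := ∑ i, x i • f i with hg
      have hg0 : g ≠ 0 := fun h => hx (by
        ext i
        exact Fintype.linearIndependent_iff.1 hli x h i)
      obtain ⟨n, hn⟩ : ∃ n, g n ≠ 0 := by
        by_contra! h
        exact hg0 (by ext n; simp [h n])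
      have h1 := hAbd g n
      have h2 : 0 < ‖g n‖ ^ 2 := by positivity
      rw [Complex.lt_def]
      refine ⟨by simp only [Complex.zero_re]; linarith, ?_⟩
      have := hAsymm g g
      rw [← inner_conj_symm] at this
      have := congrArg Complex.im this
      simp only [Complex.conj_im] at this
      simp only [Complex.zero_im]; linarith
  have hdet : IsUnit M.det := (Matrix.isUnit_iff_isUnit_det _).1 hposdef.isUnit
  set B := M⁻¹ with hB
  have hBpos : B.PosDef := hposdef.inv
  -- on an eigenvector, `σ T f = A f + (σ λ - d) f`
  have hW : ∀ i j, (σ : ℂ) * inner ℂ (f j) (T (f i))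
      = M j i + if i = j then (((σ * lam i - d) * ‖f i‖ ^ 2 : ℝ) : ℂ) else 0 := by
    intro i j
    have e : (σ : ℂ) • T (f i) = A (f i) + ((σ * lam i - d : ℝ) : ℂ) • f i := by
      have := heig i
      rw [add_apply] at this
      rw [hAapp, eq_sub_of_add_eq' this]
      push_cast
      module
    rw [← inner_smul_right, e, inner_add_right, inner_smul_right, hM, Matrix.of_apply]
    congr 1
    split_ifs with hij
    · subst hij
      rw [inner_self_eq_norm_sq_to_K]
      push_cast; rfl
    · rw [horth j i (Ne.symm hij), mul_zero]
  set S : (Fin d → ℤ) → ℂ := fun n => ∑ i, ∑ j, B i j * (starRingEnd ℂ (f j n) * f i n) with hS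
  have hsum : HasSum (fun n => (σ : ℂ) * V n * S n)
      (∑ i, ∑ j, B i j * ((σ : ℂ) * inner ℂ (f j) (T (f i)))) := by
    have := hasSum_sum (s := Finset.univ) (fun i (_ : i ∈ Finset.univ) =>
      hasSum_sum (s := Finset.univ) (fun j (_ : j ∈ Finset.univ) =>
        ((hasSum_inner_T hT (f j) (f i)).mul_left (σ : ℂ)).mul_left (B i j)))
    refine this.congr_fun fun n => ?_
    simp only [hS, Finset.mul_sum]
    refine Finset.sum_congr rfl fun i _ => Finset.sum_congr rfl fun j _ => ?_
    ring
  have htrace : (Fintype.card ι : ℝ)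
      ≤ (∑ i, ∑ j, B i j * ((σ : ℂ) * inner ℂ (f j) (T (f i)))).re := by
    have h1 : ∀ i, ∑ j, B i j * M j i = 1 := by
      intro i
      have := congrFun (congrFun (Matrix.nonsing_inv_mul M hdet) i) i
      rwa [Matrix.mul_apply, Matrix.one_apply_eq] at this
    simp only [hW, mul_add, Finset.sum_add_distrib, h1, mul_ite, mul_zero, Finset.sum_ite_eq,
      Finset.mem_univ, if_true]
    rw [Complex.add_re]
    have h2 : 0 ≤ (∑ i, B i i * (((σ * lam i - d) * ‖f i‖ ^ 2 : ℝ) : ℂ)).re := by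
      rw [Complex.re_sum]
      refine Finset.sum_nonneg fun i _ => ?_
      rw [Complex.re_mul_ofReal]
      refine mul_nonneg ?_ (mul_nonneg (by linarith [hlam i]) (sq_nonneg _))
      have := hBpos.posSemidef.diag_nonneg (i := i)
      exact (Complex.le_def.1 this).1
    have h3 : (∑ _i : ι, (1 : ℂ)).re = Fintype.card ι := by simp
    rw [h3]; linarith
  have hSbd : ∀ n, ‖S n‖ ≤ 85 / 6 := by
    intro n
    -- the vector `g` represents evaluation at `n` in the form `Q`, so `Q(g) = g n = S n`
    set v : ι → ℂ := fun j => starRingEnd ℂ (f j n) with hv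
    set x : ι → ℂ := B.mulVec v with hx
    set g := ∑ i, x i • f i with hg
    have hgn : g n = S n := by
      have : g n = ∑ i, x i * f i n := by
        rw [hg, lp.coeFn_sum, Finset.sum_apply]; rfl
      rw [this, hS]
      refine Finset.sum_congr rfl fun i _ => ?_
      rw [hx, Matrix.mulVec, dotProduct, Finset.sum_mul]
      refine Finset.sum_congr rfl fun j _ => ?_
      ring
    have hMx : M.mulVec x = v := by
      rw [hx, Matrix.mulVec_mulVec, Matrix.mul_nonsing_inv M hdet, Matrix.one_mulVec]
    have h1 := hquad x
    rw [hMx] at h1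
    have h2 : star x ⬝ᵥ v = starRingEnd ℂ (g n) := by
      have : g n = ∑ i, x i * f i n := by
        rw [hg, lp.coeFn_sum, Finset.sum_apply]; rfl
      rw [this, map_sum]
      refine Finset.sum_congr rfl fun i _ => ?_
      simp [hv]
    have h3 := hAbd g n
    rw [← h1, h2, hgn, Complex.conj_re] at h3
    have h4 := Complex.re_le_norm (S n)
    by_contra! h5
    nlinarith
  have hfin : ‖∑ i, ∑ j, B i j * ((σ : ℂ) * inner ℂ (f j) (T (f i)))‖ ≤ 85 / 6 * ∑' n, |V n| := by
    rw [← hsum.tsum_eq]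
    refine tsum_of_norm_bounded (hV.hasSum.mul_left _) fun n => ?_
    rw [norm_mul, norm_mul, Complex.norm_real, Complex.norm_real, Real.norm_eq_abs,
      Real.norm_eq_abs, hσ, one_mul, mul_comm]
    exact mul_le_mul_of_nonneg_right (hSbd n) (abs_nonneg _)
  exact htrace.trans ((Complex.re_le_norm _).trans hfin)

/-- `‖V‖₁ ≤ ‖V‖_{2/3}`. -/
lemma summable_abs_and_tsum_le {ι : Type*} {V : ι → ℝ} (hV : Summable fun n => |V n| ^ ((2 : ℝ) / 3)) :
    Summable (fun n => |V n|) ∧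
      ∑' n, |V n| ≤ (∑' n, |V n| ^ ((2 : ℝ) / 3)) ^ ((3 : ℝ) / 2) := by
  set A := ∑' n, |V n| ^ ((2 : ℝ) / 3) with hA
  have hA0 : 0 ≤ A := tsum_nonneg fun n => by positivity
  have key : ∀ n, |V n| ≤ |V n| ^ ((2 : ℝ) / 3) * A ^ ((1 : ℝ) / 2) := by
    intro n
    have h0 : 0 ≤ |V n| ^ ((2 : ℝ) / 3) := by positivity
    have h1 : |V n| ^ ((2 : ℝ) / 3) ≤ A := hV.le_tsum n fun m _ => by positivity
    have h2 := Real.rpow_le_rpow h0 h1 (by norm_num : (0 : ℝ) ≤ 1 / 2)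
    calc |V n| = |V n| ^ ((2 : ℝ) / 3) * (|V n| ^ ((2 : ℝ) / 3)) ^ ((1 : ℝ) / 2) := by
          rw [← Real.rpow_mul (abs_nonneg _), ← Real.rpow_add' (abs_nonneg _) (by norm_num)]
          norm_num
      _ ≤ _ := mul_le_mul_of_nonneg_left h2 h0
  have hs := hV.mul_right (A ^ ((1 : ℝ) / 2))
  have hsV : Summable fun n => |V n| := Summable.of_nonneg_of_le (fun n => abs_nonneg _) key hs
  refine ⟨hsV, (hsV.tsum_le_tsum key hs).trans (le_of_eq ?_)⟩
  rw [tsum_mul_right, ← hA]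
  nth_rewrite 1 [← Real.rpow_one A]
  rw [← Real.rpow_add' hA0 (by norm_num)]
  norm_num

lemma card_filter_le {d : ℕ} (hd : 3 ≤ d) {V : (Fin d → ℤ) → ℝ} (hV : Summable fun n => |V n|)
    {L T : Ell2 d →L[ℂ] Ell2 d} (hL : IsDiscreteLaplacian d L)
    (hT : IsMulOp d (fun n => (V n : ℂ)) T) (σ : ℝ) (hσ : |σ| = 1)
    (s : Finset (realEvSet d (L + T))) (hs : ∀ l ∈ s, (d : ℝ) < σ * (l : ℂ).re) :
    (s.card : ℝ) ≤ 85 / 6 * ∑' n, |V n| := by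
  classical
  choose f hf hfe using fun l : s => l.1.2.1
  have him : ∀ l : s, (((l.1 : ℂ).re : ℝ) : ℂ) = l.1 := fun l =>
    Complex.ext (by simp) (by simp [l.1.2.2.1])
  have := card_le hd hV hL hT σ hσ (fun l : s => (l.1 : ℂ).re)
    (fun a b hab => by
      apply Subtype.ext; apply Subtype.ext
      rw [← him a, ← him b]; exact congrArg _ hab)
    (fun l => hs l.1 l.2) f hf (fun l => by rw [him l]; exact hfe l)
  simpa using this

/-- For `d ≥ 3` there is `C = C(d) > 0` such that for every real-valued
`V ∈ ℓ^{2/3}(ℤᵈ, ℝ)`, with `H = Δ + V` and `E` the set of (necessarily real) eigenvalues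
`λ` of `H` with `|λ| > d`, one has `∑_{λ ∈ E} √((|λ|-d)/(|λ|+d)) ≤ C‖V‖_{2/3}`. -/
theorem statement18 (d : ℕ) (hd : 3 ≤ d) :
    ∃ C : ℝ, 0 < C ∧
      ∀ (V : (Fin d → ℤ) → ℝ), Summable (fun n => |V n| ^ ((2:ℝ)/3)) →
      ∀ (L T : lp (fun _ : Fin d → ℤ => ℂ) 2 →L[ℂ] lp (fun _ : Fin d → ℤ => ℂ) 2),
        IsDiscreteLaplacian d L → IsMulOp d (fun n => (V n : ℂ)) T →
        Summable (fun l : realEvSet d (L + T) =>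
          Real.sqrt ((|(l : ℂ).re| - d) / (|(l : ℂ).re| + d))) ∧
        (∑' l : realEvSet d (L + T), Real.sqrt ((|(l : ℂ).re| - d) / (|(l : ℂ).re| + d)))
          ≤ C * (∑' n : Fin d → ℤ, |V n| ^ ((2:ℝ)/3)) ^ ((3:ℝ)/2) := by
  refine ⟨85 / 3, by norm_num, fun V hV L T hL hT => ?_⟩
  obtain ⟨hV1, hV2⟩ := summable_abs_and_tsum_le hV
  have hbd : ∀ s : Finset (realEvSet d (L + T)),
      ∑ l ∈ s, Real.sqrt ((|(l : ℂ).re| - d) / (|(l : ℂ).re| + d))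
        ≤ 85 / 3 * (∑' n : Fin d → ℤ, |V n| ^ ((2:ℝ)/3)) ^ ((3:ℝ)/2) := by
    intro s
    have h1 : ∑ l ∈ s, Real.sqrt ((|(l : ℂ).re| - d) / (|(l : ℂ).re| + d)) ≤ s.card := by
      refine (Finset.sum_le_card_nsmul s _ 1 fun l _ => ?_).trans (by simp)
      have h := l.2.2.2
      rw [Real.sqrt_le_one, div_le_one (by positivity)]
      linarith [(Nat.cast_nonneg d : (0 : ℝ) ≤ d)]
    have hp := card_filter_le hd hV1 hL hT 1 (by norm_num)
      (s.filter fun l => 0 < (l : ℂ).re) (fun l hl => by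
        have h := l.2.2.2
        rw [abs_of_pos (Finset.mem_filter.1 hl).2] at h
        linarith)
    have hn := card_filter_le hd hV1 hL hT (-1) (by norm_num)
      (s.filter fun l => ¬ 0 < (l : ℂ).re) (fun l hl => by
        have h := l.2.2.2
        rw [abs_of_nonpos (not_lt.1 (Finset.mem_filter.1 hl).2)] at h
        linarith)
    have hc : (s.card : ℝ) = (s.filter fun l : realEvSet d (L + T) => 0 < (l : ℂ).re).card
        + (s.filter fun l : realEvSet d (L + T) => ¬ 0 < (l : ℂ).re).card := by
      exact_mod_cast (Finset.card_filter_add_card_filter_not (s := s)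
        (fun l : realEvSet d (L + T) => 0 < (l : ℂ).re)).symm
    linarith
  have hsum := summable_of_sum_le (fun l => Real.sqrt_nonneg _) hbd
  exact ⟨hsum, hsum.tsum_le_of_sum_le hbd⟩
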